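/- For the family 𝔤₁₁(z₁, z₂, z₃, w₁, θ₁, θ₂) with z₁ ≠ 0, the structure J is never integrable: there exist E, F ∈ 𝔤 with N(E,F) ≠ 0. -/

import Mathlib

noncomputable section

/-- The bilinear antisymmetric bracket on ℝ⁴ determined by the structure constants. -/
def bk (z₁ z₂ z₃ w₁ θ₁ θ₂ : ℝ) (E F : Fin 4 → ℝ) : Fin 4 → ℝ :=
  (E 0 * F 1 - E 1 * F 0) • (![0, 0, -θ₁, -θ₂] : Fin 4 → ℝ) +
  (E 0 * F 2 - E 2 * F 0) • (![0, 0, -z₁, -w₁] : Fin 4 → ℝ) +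
  (E 0 * F 3 - E 3 * F 0) • (![0, 0, -z₃, z₁] : Fin 4 → ℝ) +
  (E 1 * F 2 - E 2 * F 1) • (![0, 0, -z₂, -(z₂ * w₁ / z₁)] : Fin 4 → ℝ) +
  (E 1 * F 3 - E 3 * F 1) • (![0, 0, -(z₂ * z₃ / z₁), z₂] : Fin 4 → ℝ) +
  (E 2 * F 3 - E 3 * F 2) • (![0, 0, 0, 0] : Fin 4 → ℝ)

/-- The almost Hermitian structure J with J(X)=Y, J(Y)=-X, J(Z)=W, J(W)=-Z. -/
def Jm (E : Fin 4 → ℝ) : Fin 4 → ℝ := ![-E 1, E 0, -E 3, E 2]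

/-- The Nijenhuis tensor of J. -/
def NT (z₁ z₂ z₃ w₁ θ₁ θ₂ : ℝ) (E F : Fin 4 → ℝ) : Fin 4 → ℝ :=
  bk z₁ z₂ z₃ w₁ θ₁ θ₂ E F + Jm (bk z₁ z₂ z₃ w₁ θ₁ θ₂ (Jm E) F) + Jm (bk z₁ z₂ z₃ w₁ θ₁ θ₂ E (Jm F)) -
    bk z₁ z₂ z₃ w₁ θ₁ θ₂ (Jm E) (Jm F)

theorem g11_never_integrable (z₁ z₂ z₃ w₁ θ₁ θ₂ : ℝ) (h1 : z₁ ≠ 0) :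
    ∃ E F : Fin 4 → ℝ, NT z₁ z₂ z₃ w₁ θ₁ θ₂ E F ≠ 0 := by
  refine ⟨![0, 0, 1, 0], ![1, 0, 0, 0], fun h => ?_⟩
  have h2 := congrFun h 2
  have h3 := congrFun h 3
  simp [NT, bk, Jm] at h2 h3
  field_simp at h2
  have hs : w₁ = -z₃ - 2 * z₂ := by linarith
  subst hs
  have : 0 < z₁ ^ 2 := by positivity
  nlinarith [sq_nonneg z₂]

end
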